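/- arXiv:1004.1660 — 14 statements merged into one kernel-verified Lean document; each statement's English description precedes it below -/
import Mathlib

section
/- Schur's lemma for modules over semirings: Let A be a semiring and let M and N be A-modules, and let φ : M → N be a nonzero A-linear map. Then (1) if M is simple, φ is injective; (2) if N is minimal, φ is surjective; (3) if M is simple and N is minimal, φ is bijective. -/
/-!
Over a semiring the kernel submodule does not detect injectivity; its role is played by the
kernel congruence `φ x = φ y`. Simplicity of `M` makes it trivial (`φ` is injective) or full
(`φ = 0`). Minimality of `N`, applied to the range of `φ`, gives surjectivity.
-/

/-- A module congruence: an equivalence relation compatible with addition and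
scalar multiplication. -/
def IsModuleCongruence {A M : Type*} [Semiring A] [AddCommMonoid M] [Module A M]
    (r : M → M → Prop) : Prop :=
  Equivalence r ∧ (∀ x y z : M, r x y → r (x + z) (y + z)) ∧
    (∀ (a : A) (x y : M), r x y → r (a • x) (a • y))

/-- A module is simple if every module congruence is trivial or full. -/
def IsSimpleModule' (A M : Type*) [Semiring A] [AddCommMonoid M] [Module A M] : Prop :=
  ∀ r : M → M → Prop, IsModuleCongruence (A := A) r →
    (∀ x y : M, r x y → x = y) ∨ (∀ x y : M, r x y)

/-- Schur's lemma over semirings: a nonzero linear map from a simple module is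
injective, to a minimal module is surjective, and from a simple to a minimal
module is bijective. -/
theorem schur_lemma_semiring {A M N : Type*} [Semiring A]
    [AddCommMonoid M] [Module A M] [AddCommMonoid N] [Module A N]
    (φ : M →ₗ[A] N) (hφ : φ ≠ 0) :
    (IsSimpleModule' A M → Function.Injective φ) ∧
    (IsSimpleOrder (Submodule A N) → Function.Surjective φ) ∧
    (IsSimpleModule' A M → IsSimpleOrder (Submodule A N) → Function.Bijective φ) := by
  have inj : IsSimpleModule' A M → Function.Injective φ := by
    intro hM
    have hcong : IsModuleCongruence (A := A) (fun x y : M => φ x = φ y) := by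
      refine ⟨⟨fun _ => rfl, fun h => h.symm, fun h k => h.trans k⟩, ?_, ?_⟩
      · intro x y z h
        simp only [map_add, h]
      · intro a x y h
        simp only [map_smul, h]
    rcases hM _ hcong with h | h
    · exact fun x y hxy => h x y hxy
    -- If the kernel congruence is full, every `x` is identified with `0`, so `φ = 0`.
    · exact absurd (LinearMap.ext fun x => (h x 0).trans (map_zero φ)) hφ
  have surj : IsSimpleOrder (Submodule A N) → Function.Surjective φ := by
    intro hN
    rcases hN.eq_bot_or_eq_top (LinearMap.range φ) with h | h
    · exact absurd (LinearMap.range_eq_bot.mp h) hφ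
    · exact LinearMap.range_eq_top.mp h
  exact ⟨inj, surj, fun hM hN => ⟨inj hM, surj hN⟩⟩
end

section
/- Extension of congruences from a corner: Let A be a semiring, e ∈ A an idempotent (e*e = e), and M an A-module. Let eM = {x : M | ∃ m, x = e • m}. Let R be an equivalence relation on the elements of eM such that for x, y, z ∈ eM, R x y implies R (x+z) (y+z), and for all a ∈ A, R x y implies R ((e*a*e) • x) ((e*a*e) • y). Define a relation R' on M by: R' m m' if and only if R ((e*a) • m) ((e*a) • m') for all a ∈ A. Then: (i) R' is an A-module congruence on M (an equivalence relation compatible with addition and with every scalar of A); (ii) the restriction of R' to eM coincides with R; (iii) R' is the largest A-module congruence on M whose restriction to eM is contained in R, i.e., if R'' is any A-module congruence on M such that R'' x y implies R x y whenever x, y ∈ eM, then R'' m m' implies R' m m' for all m, m' ∈ M. -/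
/-!
Every `(e * a) • m` lies in `eM`, so the properties of `R` on `eM` transfer to `R'` pointwise in
`a`; stability under a scalar `b` holds because `(e * a) • b • m = (e * (a * b)) • m`. An element
`x` of `eM` satisfies `e • x = x`, so on `eM` the defining condition at `a = 1` is `R` itself, and
the condition at a general `a` is compatibility of `R` with `e * a * e`. A congruence `R''` is
stable under all scalars `e * a`, which gives maximality.
-/

/-- Extension of a congruence from the corner `eM` to the whole module `M`:
the extended relation `R'` (defined by `R' m m' ↔ ∀ a, R ((e*a) • m) ((e*a) • m')`)
is a module congruence on `M`, restricts to `R` on `eM`, and is the largest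
module congruence whose restriction to `eM` is contained in `R`. -/
theorem extend_corner_congruence {A M : Type*} [Semiring A] [AddCommMonoid M]
    [Module A M] (e : A) (he : e * e = e)
    (eM : Set M) (heM : eM = {x : M | ∃ m : M, x = e • m})
    (R : M → M → Prop)
    (hrefl : ∀ x ∈ eM, R x x)
    (hsymm : ∀ x ∈ eM, ∀ y ∈ eM, R x y → R y x)
    (htrans : ∀ x ∈ eM, ∀ y ∈ eM, ∀ z ∈ eM, R x y → R y z → R x z)
    (hadd : ∀ x ∈ eM, ∀ y ∈ eM, ∀ z ∈ eM, R x y → R (x + z) (y + z))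
    (hsmul : ∀ a : A, ∀ x ∈ eM, ∀ y ∈ eM, R x y → R ((e * a * e) • x) ((e * a * e) • y))
    (R' : M → M → Prop)
    (hR' : ∀ m m' : M, R' m m' ↔ ∀ a : A, R ((e * a) • m) ((e * a) • m')) :
    -- (i) R' is a module congruence on M
    (Equivalence R' ∧ (∀ m m' z : M, R' m m' → R' (m + z) (m' + z)) ∧
      (∀ (a : A) (m m' : M), R' m m' → R' (a • m) (a • m'))) ∧
    -- (ii) R' restricted to eM coincides with R
    (∀ x ∈ eM, ∀ y ∈ eM, (R' x y ↔ R x y)) ∧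
    -- (iii) R' is the largest module congruence whose restriction to eM is contained in R
    (∀ R'' : M → M → Prop,
      Equivalence R'' →
      (∀ m m' z : M, R'' m m' → R'' (m + z) (m' + z)) →
      (∀ (a : A) (m m' : M), R'' m m' → R'' (a • m) (a • m')) →
      (∀ x ∈ eM, ∀ y ∈ eM, R'' x y → R x y) →
      ∀ m m' : M, R'' m m' → R' m m') := by
  have mem : ∀ (a : A) (m : M), (e * a) • m ∈ eM := fun a m => by
    rw [heM]
    exact ⟨a • m, mul_smul e a m⟩
  have fix : ∀ x ∈ eM, e • x = x := by
    intro x hx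
    rw [heM] at hx
    obtain ⟨m, rfl⟩ := hx
    rw [← mul_smul, he]
  refine ⟨⟨⟨?_, ?_, ?_⟩, ?_, ?_⟩, ?_, ?_⟩
  · intro m
    exact (hR' _ _).2 fun a => hrefl _ (mem a m)
  · intro m m' h
    exact (hR' _ _).2 fun a => hsymm _ (mem a m) _ (mem a m') ((hR' _ _).1 h a)
  · intro m m' m'' h h'
    exact (hR' _ _).2 fun a => htrans _ (mem a m) _ (mem a m') _ (mem a m'')
      ((hR' _ _).1 h a) ((hR' _ _).1 h' a)
  · intro m m' z h
    refine (hR' _ _).2 fun a => ?_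
    rw [smul_add, smul_add]
    exact hadd _ (mem a m) _ (mem a m') _ (mem a z) ((hR' _ _).1 h a)
  · intro b m m' h
    refine (hR' _ _).2 fun a => ?_
    rw [← mul_smul, ← mul_smul, mul_assoc]
    exact (hR' _ _).1 h (a * b)
  · intro x hx y hy
    constructor
    · intro h
      have h1 := (hR' _ _).1 h 1
      rwa [mul_one, fix x hx, fix y hy] at h1
    · intro h
      refine (hR' _ _).2 fun a => ?_
      have h1 := hsmul a x hx y hy h
      rwa [mul_smul, mul_smul (e * a) e y, fix x hx, fix y hy] at h1
  · intro R'' _ _ hs hsub m m' h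
    exact (hR' _ _).2 fun a => hsub _ (mem a m) _ (mem a m') (hs _ _ _ h)
end

section
/- Corner of a minimal module is minimal (Green's lemma, minimal case): Let A be a semiring, e ∈ A an idempotent (e*e = e), and M an A-module which is minimal and satisfies e • m ≠ 0 for some m ∈ M. Then the corner eM = {x : M | ∃ m, x = e • m} is a minimal eAe-module: for every x ∈ eM with x ≠ 0 and every y ∈ eM, there exists a ∈ A with (e*a*e) • x = y. -/
/-- Green's lemma, minimal case: if `M` is a minimal `A`-module not annihilated by
the idempotent `e`, then the corner `eM` is a minimal `eAe`-module: every nonzero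
element of `eM` generates all of `eM` under the action of the scalars `e*a*e`. -/
theorem corner_of_minimal_is_minimal {A M : Type*} [Semiring A] [AddCommMonoid M]
    [Module A M] (e : A) (he : e * e = e)
    (hmin : IsSimpleOrder (Submodule A M))
    (hne : ∃ m : M, e • m ≠ 0) :
    ∀ x ∈ {x : M | ∃ m : M, x = e • m}, x ≠ 0 →
      ∀ y ∈ {x : M | ∃ m : M, x = e • m}, ∃ a : A, (e * a * e) • x = y := by
  rintro _ ⟨m, rfl⟩ hx _ ⟨n, rfl⟩
  -- By minimality the cyclic submodule generated by `e • m` is everything.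
  have htop : Submodule.span A {e • m} = ⊤ :=
    (eq_bot_or_eq_top _).resolve_left fun h => hx (Submodule.span_singleton_eq_bot.mp h)
  have hn : n ∈ Submodule.span A {e • m} := htop ▸ Submodule.mem_top
  obtain ⟨a, rfl⟩ := Submodule.mem_span_singleton.mp hn
  exact ⟨a, by rw [smul_smul, smul_smul, smul_smul, mul_assoc (e * a), he]⟩
end

section
/- Corner of a simple module is simple (Green's lemma, simple case): Let A be a semiring, e ∈ A an idempotent (e*e = e), and M a simple A-module. Let eM = {x : M | ∃ m, x = e • m}. Then eM is a simple eAe-module: every equivalence relation R on the elements of eM such that for x, y, z ∈ eM, R x y implies R (x+z) (y+z), and for all a ∈ A, R x y implies R ((e*a*e) • x) ((e*a*e) • y), is either trivial (R x y → x = y) or full (R x y for all x, y ∈ eM). -/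
/-!
Given an `eAe`-congruence `R` on `eM`, the relation `r x y := ∀ a, R (e • a • x) (e • a • y)` is an
`A`-congruence on `M`, hence trivial or full. Since `e` acts as the identity on `eM`, the restriction
of `r` to `eM` is exactly `R`: one direction is `a = 1`, and the other holds because
`e • a • x = (e * a * e) • x` for `x ∈ eM`. So `R` is trivial or full accordingly.
-/

/-- Green's lemma, simple case: if `M` is a simple `A`-module and `e` is an
idempotent of `A`, then the corner `eM` is a simple `eAe`-module: every
`eAe`-module congruence on `eM` is trivial or full. -/
theorem corner_of_simple_is_simple {A M : Type*} [Semiring A] [AddCommMonoid M]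
    [Module A M] (e : A) (he : e * e = e)
    (hsimple : ∀ r : M → M → Prop,
      Equivalence r →
      (∀ x y z : M, r x y → r (x + z) (y + z)) →
      (∀ (a : A) (x y : M), r x y → r (a • x) (a • y)) →
      (∀ x y : M, r x y → x = y) ∨ (∀ x y : M, r x y))
    (eM : Set M) (heM : eM = {x : M | ∃ m : M, x = e • m}) :
    ∀ R : M → M → Prop,
      (∀ x ∈ eM, R x x) →
      (∀ x ∈ eM, ∀ y ∈ eM, R x y → R y x) →
      (∀ x ∈ eM, ∀ y ∈ eM, ∀ z ∈ eM, R x y → R y z → R x z) →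
      (∀ x ∈ eM, ∀ y ∈ eM, ∀ z ∈ eM, R x y → R (x + z) (y + z)) →
      (∀ a : A, ∀ x ∈ eM, ∀ y ∈ eM, R x y → R ((e * a * e) • x) ((e * a * e) • y)) →
      (∀ x ∈ eM, ∀ y ∈ eM, R x y → x = y) ∨ (∀ x ∈ eM, ∀ y ∈ eM, R x y) := by
  intro R hrefl hsymm htrans hadd hsmul
  subst heM
  have hmem : ∀ m : M, e • m ∈ {x : M | ∃ m : M, x = e • m} := fun m => ⟨m, rfl⟩
  have hfix : ∀ x ∈ {x : M | ∃ m : M, x = e • m}, e • x = x := by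
    rintro _ ⟨m, rfl⟩
    rw [smul_smul, he]
  rcases hsimple (fun x y => ∀ a : A, R (e • a • x) (e • a • y))
    ⟨fun x a => hrefl _ (hmem _),
      fun h a => hsymm _ (hmem _) _ (hmem _) (h a),
      fun h h' a => htrans _ (hmem _) _ (hmem _) _ (hmem _) (h a) (h' a)⟩
    (fun x y z h a => by
      simpa only [smul_add] using hadd _ (hmem _) _ (hmem _) _ (hmem (a • z)) (h a))
    (fun b x y h a => by simpa only [mul_smul] using h (a * b)) with h | h
  · refine Or.inl fun x hx y hy hxy => h x y fun a => ?_
    have key := hsmul a x hx y hy hxy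
    rwa [mul_smul, mul_smul, mul_smul, mul_smul, hfix x hx, hfix y hy] at key
  · refine Or.inr fun x hx y hy => ?_
    have key := h x y 1
    rwa [one_smul, one_smul, hfix x hx, hfix y hy] at key
end

section
/- Every minimal module over a finite semigroup has an apex: Let S be a finite semigroup, k a commutative semiring with unit, M a k-module, and ρ : S → End_k(M) a representation of S on M. Assume the representation is nonzero and M is minimal. Then M has an apex: there exists a regular element j ∈ S such that for every s ∈ S, ρ(s) = 0 if and only if ¬(j ≤_J s). -/
/-!
Choose `j` minimal for the `J`-order among the elements with `ρ j ≠ 0`. If `ρ s ≠ 0`, the vectors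
`ρ a m` with `a ≤_J s` span a nonzero invariant submodule, hence all of `M`; as `ρ j ≠ 0`, some
such `a` satisfies `ρ (a * j) ≠ 0`. Since `a * j ≤_J j`, minimality gives `j ≤_J a * j ≤_J s`.
Conversely `j ≤_J s` and `ρ s = 0` would force `ρ j = 0`. So `j` detects annihilation.

Taking `s = j` gives `j ≤_J a * j` with `a ≤_J j`, that is `j = p * j * (v * j * q)` in the monoid
`S¹ = WithOne S`. Finiteness (`pow_mul_eq_of_sandwich` and its mirror image) turns this into
`j = j * x * j`, which is regularity.
-/

/-- The `J`-preorder on a semigroup: `s ≤_J t` iff `s` lies in the two-sided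
principal ideal generated by `t`. -/
def JLe {S : Type*} [Semigroup S] (s t : S) : Prop :=
  s = t ∨ (∃ x, s = x * t) ∨ (∃ y, s = t * y) ∨ (∃ x y, s = x * t * y)

theorem jLe_iff_withOne {S : Type*} [Semigroup S] (s t : S) :
    JLe s t ↔ ∃ p q : WithOne S, (s : WithOne S) = p * t * q := by
  constructor
  · rintro (h | ⟨x, h⟩ | ⟨y, h⟩ | ⟨x, y, h⟩)
    · exact ⟨1, 1, by simp [h]⟩
    · exact ⟨x, 1, by simp [h]⟩
    · exact ⟨1, y, by simp [h]⟩
    · exact ⟨x, y, by simp [h]⟩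
  · rintro ⟨p, q, h⟩
    induction p using WithOne.recOneCoe with
    | one =>
      induction q using WithOne.recOneCoe with
      | one => exact Or.inl (by simpa using h)
      | coe y => exact Or.inr (Or.inr (Or.inl ⟨y, by simpa [← WithOne.coe_mul] using h⟩))
    | coe x =>
      induction q using WithOne.recOneCoe with
      | one => exact Or.inr (Or.inl ⟨x, by simpa [← WithOne.coe_mul] using h⟩)
      | coe y =>
        exact Or.inr (Or.inr (Or.inr ⟨x, y, by simpa [← WithOne.coe_mul] using h⟩))

theorem JLe.trans' {S : Type*} [Semigroup S] {s t u : S} (h : JLe s t) (h' : JLe t u) :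
    JLe s u := by
  rw [jLe_iff_withOne] at *
  obtain ⟨p, q, h⟩ := h
  obtain ⟨p', q', h'⟩ := h'
  exact ⟨p * p', q' * q, by rw [h, h']; simp only [mul_assoc]⟩

theorem eq_pow_mul_mul_pow {T : Type*} [Monoid T] {j p q : T} (h : j = p * j * q) (n : ℕ) :
    j = p ^ n * j * q ^ n := by
  induction n with
  | zero => simp
  | succ n ih =>
    calc j = p ^ n * j * q ^ n := ih
      _ = p ^ n * (p * j * q) * q ^ n := by rw [← h]
      _ = p ^ (n + 1) * j * q ^ (n + 1) := by
        rw [pow_succ p, pow_succ' q]; simp only [mul_assoc]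

theorem exists_pow_add_eq {T : Type*} [Monoid T] [Finite T] (p : T) :
    ∃ a d : ℕ, p ^ (a + (d + 1)) = p ^ a := by
  obtain ⟨x, y, hne, h⟩ := Finite.exists_ne_map_eq_of_infinite (fun n : ℕ => p ^ n)
  rcases lt_or_gt_of_ne hne with hlt | hlt
  · exact ⟨x, y - x - 1, by rw [h]; congr 1; omega⟩
  · exact ⟨y, x - y - 1, by rw [← h]; congr 1; omega⟩

/-- Stability of a finite monoid: if `j = p * j * q`, then a positive power of `p` fixes `j`.
With `p ^ (a + (d + 1)) = p ^ a`, apply `p ^ (d + 1)` to `j = p ^ a * j * q ^ a`. -/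
theorem pow_mul_eq_of_sandwich {T : Type*} [Monoid T] [Finite T] {j p q : T}
    (h : j = p * j * q) : ∃ d : ℕ, p ^ (d + 1) * j = j := by
  obtain ⟨a, d, hd⟩ := exists_pow_add_eq p
  have ha := eq_pow_mul_mul_pow h a
  refine ⟨d, ?_⟩
  calc p ^ (d + 1) * j = p ^ (d + 1) * (p ^ a * j * q ^ a) := by rw [← ha]
    _ = p ^ (a + (d + 1)) * j * q ^ a := by
      rw [add_comm a, pow_add p (d + 1) a]; simp only [mul_assoc]
    _ = j := by rw [hd, ← ha]

theorem mul_pow_eq_of_sandwich {T : Type*} [Monoid T] [Finite T] {j p q : T}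
    (h : j = p * j * q) : ∃ d : ℕ, j * q ^ (d + 1) = j := by
  obtain ⟨a, d, hd⟩ := exists_pow_add_eq q
  have ha := eq_pow_mul_mul_pow h a
  refine ⟨d, ?_⟩
  calc j * q ^ (d + 1) = (p ^ a * j * q ^ a) * q ^ (d + 1) := by rw [← ha]
    _ = p ^ a * j * q ^ (a + (d + 1)) := by
      rw [pow_add q a (d + 1)]; simp only [mul_assoc]
    _ = j := by rw [hd, ← ha]

theorem regular_of_sandwich {T : Type*} [Monoid T] [Finite T] {j p v q : T}
    (h : j = p * j * (v * j * q)) : ∃ x : T, j = j * x * j := by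
  obtain ⟨d, hd⟩ := mul_pow_eq_of_sandwich h
  have h2 : j = (j * v) * j * (q * (v * j * q) ^ d) := by
    rw [pow_succ'] at hd
    simpa only [mul_assoc] using hd.symm
  obtain ⟨e, he⟩ := pow_mul_eq_of_sandwich h2
  rw [pow_succ'] at he
  exact ⟨v * (j * v) ^ e, by simpa only [mul_assoc] using he.symm⟩

theorem regular_of_regular_withOne {S : Type*} [Semigroup S] {j : S}
    (h : ∃ x : WithOne S, (j : WithOne S) = j * x * j) : ∃ x : S, j = j * x * j := by
  obtain ⟨x, hx⟩ := h
  induction x using WithOne.recOneCoe with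
  | one =>
    have hj : j = j * j := by simpa [← WithOne.coe_mul] using hx
    exact ⟨j, by rw [← hj, ← hj]⟩
  | coe x => exact ⟨x, by simpa [← WithOne.coe_mul] using hx⟩

theorem rep_eq_zero_of_jLe {S k M : Type*} [Semigroup S]
    [CommSemiring k] [AddCommMonoid M] [Module k M] {ρ : S → Module.End k M}
    (hρ : ∀ s t : S, ρ (s * t) = ρ t * ρ s) {s t : S} (h : JLe s t) (ht : ρ t = 0) :
    ρ s = 0 := by
  rcases h with rfl | ⟨x, rfl⟩ | ⟨y, rfl⟩ | ⟨x, y, rfl⟩ <;> simp [hρ, ht]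

/-- The annihilator of a minimal module is prime-like: if neither `s` nor `j` acts as zero, then
neither does `a * j` for some `a` in the principal ideal of `s`. -/
theorem exists_jLe_mul_ne_zero {S k M : Type*} [Semigroup S]
    [CommSemiring k] [AddCommMonoid M] [Module k M] {ρ : S → Module.End k M}
    (hρ : ∀ s t : S, ρ (s * t) = ρ t * ρ s)
    (hmin : ∀ N : Submodule k M, (∀ s : S, ∀ m ∈ N, ρ s m ∈ N) → N = ⊥ ∨ N = ⊤)
    {s j : S} (hs : ρ s ≠ 0) (hj : ρ j ≠ 0) : ∃ a : S, JLe a s ∧ ρ (a * j) ≠ 0 := by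
  by_contra! hcon
  let N : Submodule k M := Submodule.span k {x | ∃ a m, JLe a s ∧ x = ρ a m}
  have hinv : ∀ t : S, ∀ m ∈ N, ρ t m ∈ N := by
    intro t
    change N ≤ N.comap (ρ t)
    refine Submodule.span_le.2 ?_
    rintro _ ⟨a, m, ha, rfl⟩
    refine Submodule.subset_span ⟨a * t, m, ?_, by simp [hρ]⟩
    exact JLe.trans' (Or.inr (Or.inr (Or.inl ⟨t, rfl⟩))) ha
  rcases hmin N hinv with h | h
  · refine hs (LinearMap.ext fun m => ?_)
    have hm : ρ s m ∈ N := Submodule.subset_span ⟨s, m, Or.inl rfl, rfl⟩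
    simpa [h] using hm
  · have hker : N ≤ LinearMap.ker (ρ j) := by
      refine Submodule.span_le.2 ?_
      rintro _ ⟨a, m, ha, rfl⟩
      have := LinearMap.congr_fun (hcon a ha) m
      simpa [hρ] using this
    rw [h, top_le_iff] at hker
    exact hj (LinearMap.ker_eq_top.1 hker)

/-- Every minimal module over a finite semigroup has an apex: there is a regular
element `j` such that an element `s` annihilates `M` iff `j` is not `J`-below `s`. -/
theorem minimal_module_has_apex {S k M : Type*} [Semigroup S] [Finite S]
    [CommSemiring k] [AddCommMonoid M] [Module k M]
    (ρ : S → Module.End k M)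
    (hρ : ∀ s t : S, ρ (s * t) = ρ t * ρ s)
    (hnz : ∃ (s : S) (m : M), ρ s m ≠ 0)
    (hnontriv : Nontrivial M)
    (hmin : ∀ N : Submodule k M, (∀ s : S, ∀ m ∈ N, ρ s m ∈ N) → N = ⊥ ∨ N = ⊤) :
    ∃ j : S, (∃ x : S, j = j * x * j) ∧ ∀ s : S, ρ s = 0 ↔ ¬ JLe j s := by
  obtain ⟨s₀, m₀, h₀⟩ := hnz
  have hs₀ : ρ s₀ ≠ 0 := fun h => h₀ (by simp [h])
  obtain ⟨j, hj, hjmin⟩ := (Set.toFinite {s : S | ρ s ≠ 0}).exists_minimalFor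
    (fun s : S => {t : S | JLe t s}) _ ⟨s₀, hs₀⟩
  have hlow : ∀ t : S, ρ t ≠ 0 → JLe t j → JLe j t := fun t ht htj =>
    hjmin ht (fun u hu => JLe.trans' hu htj) (Or.inl rfl : JLe j j)
  have hmul : ∀ a : S, ρ (a * j) ≠ 0 → JLe j (a * j) := fun a ha =>
    hlow _ ha (Or.inr (Or.inl ⟨a, rfl⟩))
  refine ⟨j, ?_, fun s => ⟨fun hs hjs => hj (rep_eq_zero_of_jLe hρ hjs hs), fun hjs => ?_⟩⟩
  · obtain ⟨a, haj, ha⟩ := exists_jLe_mul_ne_zero hρ hmin hj hj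
    obtain ⟨p, q, hpq⟩ := (jLe_iff_withOne _ _).1 (hmul a ha)
    obtain ⟨u, v, huv⟩ := (jLe_iff_withOne _ _).1 haj
    have : Finite (WithOne S) := inferInstanceAs (Finite (Option S))
    refine regular_of_regular_withOne
      (regular_of_sandwich (p := p * u) (v := v) (q := q) ?_)
    rw [WithOne.coe_mul, huv] at hpq
    simpa only [mul_assoc] using hpq
  · by_contra hs
    obtain ⟨a, has, ha⟩ := exists_jLe_mul_ne_zero hρ hmin hs hj
    exact hjs ((hmul a ha).trans' (JLe.trans' (Or.inr (Or.inr (Or.inl ⟨j, rfl⟩))) has))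
end

section
/- A finite semigroup with a faithful irreducible module is generalized group mapping: Let S be a finite semigroup, k a commutative semiring with unit, M a k-module, and ρ : S → End_k(M) a representation of S on M which is faithful and irreducible. Let j ∈ S be an apex of M, and let J = {x ∈ S | x ≤_J j and j ≤_J x} be the J-class of j. Then S acts faithfully on both the right and the left of J ∪ {0}: (a) for all s, t ∈ S, if for every x ∈ J either (x*s ∈ J and x*t ∈ J and x*s = x*t) or (x*s ∉ J and x*t ∉ J), then s = t; (b) for all s, t ∈ S, if for every x ∈ J either (s*x ∈ J and t*x ∈ J and s*x = t*x) or (s*x ∉ J and t*x ∉ J), then s = t. -/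
theorem JLe.mul_right {S : Type*} [Semigroup S] {x j : S} (h : JLe x j) (s : S) :
    JLe (x * s) j := by
  rcases h with rfl | ⟨a, rfl⟩ | ⟨b, rfl⟩ | ⟨a, b, rfl⟩
  · exact Or.inr (Or.inr (Or.inl ⟨s, rfl⟩))
  · exact Or.inr (Or.inr (Or.inr ⟨a, s, rfl⟩))
  · exact Or.inr (Or.inr (Or.inl ⟨b * s, mul_assoc _ _ _⟩))
  · exact Or.inr (Or.inr (Or.inr ⟨a, b * s, mul_assoc _ _ _⟩))

theorem JLe.mul_left {S : Type*} [Semigroup S] {x j : S} (h : JLe x j) (s : S) :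
    JLe (s * x) j := by
  rcases h with rfl | ⟨a, rfl⟩ | ⟨b, rfl⟩ | ⟨a, b, rfl⟩
  · exact Or.inr (Or.inl ⟨s, rfl⟩)
  · exact Or.inr (Or.inl ⟨s * a, (mul_assoc _ _ _).symm⟩)
  · exact Or.inr (Or.inr (Or.inr ⟨s, b, (mul_assoc _ _ _).symm⟩))
  · exact Or.inr (Or.inr (Or.inr ⟨s * a, b, by simp only [mul_assoc]⟩))

/-- A finite semigroup with a faithful irreducible module is generalized group
mapping: it acts faithfully on both the right and the left of `J ∪ {0}`, where
`J` is the `J`-class of the apex. -/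
theorem faithful_irreducible_generalized_group_mapping {S k M : Type*}
    [Semigroup S] [Finite S] [CommSemiring k] [AddCommMonoid M] [Module k M]
    (ρ : S → Module.End k M)
    (hρ : ∀ s t : S, ρ (s * t) = ρ t * ρ s)
    (hfaithful : ∀ s t : S, (∀ m : M, ρ s m = ρ t m) → s = t)
    (hnz : ∃ (s : S) (m : M), ρ s m ≠ 0)
    (hnontriv : Nontrivial M)
    (hmin : ∀ N : Submodule k M, (∀ s : S, ∀ m ∈ N, ρ s m ∈ N) → N = ⊥ ∨ N = ⊤)
    (hsimple : ∀ r : M → M → Prop,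
      Equivalence r →
      (∀ x y z : M, r x y → r (x + z) (y + z)) →
      (∀ (c : k) (x y : M), r x y → r (c • x) (c • y)) →
      (∀ (s : S) (x y : M), r x y → r (ρ s x) (ρ s y)) →
      (∀ x y : M, r x y → x = y) ∨ (∀ x y : M, r x y))
    (j : S) (hreg : ∃ x : S, j = j * x * j)
    (hapex : ∀ s : S, ρ s = 0 ↔ ¬ JLe j s) :
    -- (a) S acts faithfully on the right of J ∪ {0}
    (∀ s t : S,
      (∀ x : S, (JLe x j ∧ JLe j x) →
        (((JLe (x * s) j ∧ JLe j (x * s)) ∧ (JLe (x * t) j ∧ JLe j (x * t)) ∧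
            x * s = x * t) ∨
          (¬(JLe (x * s) j ∧ JLe j (x * s)) ∧ ¬(JLe (x * t) j ∧ JLe j (x * t))))) →
      s = t) ∧
    -- (b) S acts faithfully on the left of J ∪ {0}
    (∀ s t : S,
      (∀ x : S, (JLe x j ∧ JLe j x) →
        (((JLe (s * x) j ∧ JLe j (s * x)) ∧ (JLe (t * x) j ∧ JLe j (t * x)) ∧
            s * x = t * x) ∨
          (¬(JLe (s * x) j ∧ JLe j (s * x)) ∧ ¬(JLe (t * x) j ∧ JLe j (t * x))))) →
      s = t) := by
  have hzero : ∀ y : S, JLe y j → ¬(JLe y j ∧ JLe j y) → ρ y = 0 :=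
    fun y hy hn => (hapex y).2 fun h => hn ⟨hy, h⟩
  have happ : ∀ (s t : S) (m : M), ρ (s * t) m = ρ t (ρ s m) := fun s t m => by
    rw [hρ]; rfl
  have hjJ : JLe j j ∧ JLe j j := ⟨Or.inl rfl, Or.inl rfl⟩
  have hj : ∃ m, ρ j m ≠ 0 := by
    by_contra! h
    exact (hapex j).1 (LinearMap.ext h) (Or.inl rfl)
  obtain ⟨m₀, hm₀⟩ := hj
  constructor
  · intro s t hst
    -- The submodule spanned by the images of the elements of the `J`-class.
    let N : Submodule k M :=
      Submodule.span k {v | ∃ x m, (JLe x j ∧ JLe j x) ∧ ρ x m = v}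
    have hN : N = ⊤ := by
      refine (hmin N fun u m hm => ?_).resolve_left fun hbot => ?_
      · have hle : N ≤ N.comap (ρ u) := by
          refine Submodule.span_le.2 ?_
          rintro _ ⟨x, m, hx, rfl⟩
          change ρ u (ρ x m) ∈ N
          rw [← happ]
          by_cases hxu : JLe (x * u) j ∧ JLe j (x * u)
          · exact Submodule.subset_span ⟨x * u, m, hxu, rfl⟩
          · rw [hzero _ (hx.1.mul_right u) hxu]
            exact N.zero_mem
        exact hle hm
      · have hmem : ρ j m₀ ∈ N := Submodule.subset_span ⟨j, m₀, hjJ, rfl⟩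
        rw [hbot] at hmem
        exact hm₀ ((Submodule.mem_bot k).1 hmem)
    have heq : ρ s = ρ t := by
      refine LinearMap.ext_on hN ?_
      rintro _ ⟨x, m, hx, rfl⟩
      rw [← happ, ← happ]
      rcases hst x hx with ⟨-, -, h⟩ | ⟨h₁, h₂⟩
      · rw [h]
      · rw [hzero _ (hx.1.mul_right s) h₁, hzero _ (hx.1.mul_right t) h₂]
    exact hfaithful s t fun m => by rw [heq]
  · intro s t hst
    rcases hsimple (fun m n => ∀ x, (JLe x j ∧ JLe j x) → ρ x m = ρ x n)
      ⟨fun _ _ _ => rfl, fun h x hx => (h x hx).symm,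
        fun h₁ h₂ x hx => (h₁ x hx).trans (h₂ x hx)⟩
      (fun m n z h x hx => by rw [map_add, map_add, h x hx])
      (fun c m n h x hx => by rw [map_smul, map_smul, h x hx])
      (fun u m n h x hx => by
        rw [← happ, ← happ]
        by_cases hux : JLe (u * x) j ∧ JLe j (u * x)
        · exact h _ hux
        · rw [hzero _ (hx.1.mul_left u) hux]
          rfl) with htriv | hfull
    · refine hfaithful s t fun m => htriv _ _ fun x hx => ?_
      rw [← happ, ← happ]
      rcases hst x hx with ⟨-, -, h⟩ | ⟨h₁, h₂⟩
      · rw [h]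
      · rw [hzero _ (hx.1.mul_left s) h₁, hzero _ (hx.1.mul_left t) h₂]
    · exact absurd ((hfull m₀ 0 j hjJ).trans (map_zero _)) hm₀
end

section
/- Additive structure of a simple module: Let S be a semigroup, k a commutative semiring with unit, M a k-module, and ρ : S → End_k(M) a representation of S on M such that M is simple. Then either the addition of M is idempotent (m + m = m for all m ∈ M), or M is an additive abelian group (for every m ∈ M there exists n ∈ M with m + n = 0). -/
/-!
Call `x` and `y` archimedean equivalent if each of them is an additive summand of some positive
multiple of the other. This relation is compatible with addition and with every additive
endomorphism of `M`, in particular with scalars and with each `ρ s`, so by simplicity it is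
trivial or full. Since `m + m` and `m` are always equivalent, triviality means that addition is
idempotent. If the relation is full, then every `m` is a summand of a multiple of `0`, that is,
of `0` itself, so `m` has an additive inverse.
-/

/-- `y` is an additive summand of a positive multiple of `x`; the multiple is written `n + 1` to
make it positive. -/
def Dominates {M : Type*} [AddCommMonoid M] (x y : M) : Prop :=
  ∃ (n : ℕ) (z : M), (n + 1) • x = y + z

namespace Dominates

variable {M : Type*} [AddCommMonoid M] {x y u : M}

theorem refl (x : M) : Dominates x x := ⟨0, 0, by simp⟩

theorem trans (h : Dominates x y) (h' : Dominates y u) : Dominates x u := by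
  obtain ⟨n, z, hz⟩ := h
  obtain ⟨m, w, hw⟩ := h'
  -- The multiplier `(n + 1) * (m + 1)` is one more than `n * m + n + m`.
  refine ⟨n * m + n + m, w + (m + 1) • z, ?_⟩
  have e : n * m + n + m + 1 = (n + 1) * (m + 1) := by ring
  rw [e, mul_nsmul, hz, nsmul_add, hw, add_assoc]

theorem add_right (h : Dominates x y) (t : M) : Dominates (x + t) (y + t) := by
  obtain ⟨n, z, hz⟩ := h
  refine ⟨n, z + n • t, ?_⟩
  rw [nsmul_add, hz, succ_nsmul]
  abel

theorem map (h : Dominates x y) (f : M →+ M) : Dominates (f x) (f y) := by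
  obtain ⟨n, z, hz⟩ := h
  exact ⟨n, f z, by rw [← map_nsmul, hz, map_add]⟩

end Dominates

/-- The additive structure of a simple module over a semigroup algebra is either
idempotent (a join semilattice) or an abelian group. -/
theorem simple_module_additive_structure {S k M : Type*} [Semigroup S]
    [CommSemiring k] [AddCommMonoid M] [Module k M]
    (ρ : S → Module.End k M)
    (hρ : ∀ s t : S, ρ (s * t) = ρ t * ρ s)
    (hnz : ∃ (s : S) (m : M), ρ s m ≠ 0)
    (hsimple : ∀ r : M → M → Prop,
      Equivalence r →
      (∀ x y z : M, r x y → r (x + z) (y + z)) →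
      (∀ (c : k) (x y : M), r x y → r (c • x) (c • y)) →
      (∀ (s : S) (x y : M), r x y → r (ρ s x) (ρ s y)) →
      (∀ x y : M, r x y → x = y) ∨ (∀ x y : M, r x y)) :
    (∀ m : M, m + m = m) ∨ (∀ m : M, ∃ n : M, m + n = 0) := by
  have key := hsimple (fun x y => Dominates x y ∧ Dominates y x)
    ⟨fun x => ⟨.refl x, .refl x⟩, fun h => ⟨h.2, h.1⟩,
      fun h h' => ⟨h.1.trans h'.1, h'.2.trans h.2⟩⟩
    (fun _ _ z h => ⟨h.1.add_right z, h.2.add_right z⟩)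
    (fun c _ _ h => ⟨h.1.map (DistribSMul.toAddMonoidHom M c),
      h.2.map (DistribSMul.toAddMonoidHom M c)⟩)
    (fun s _ _ h => ⟨h.1.map (ρ s).toAddMonoidHom, h.2.map (ρ s).toAddMonoidHom⟩)
  rcases key with h | h
  · exact Or.inl fun m => h _ _ ⟨⟨0, m, by simp⟩, ⟨1, 0, by simp [two_nsmul]⟩⟩
  · refine Or.inr fun m => ?_
    obtain ⟨n, z, hz⟩ := (h 0 m).1
    exact ⟨z, by rw [← hz, nsmul_zero]⟩
end

section
/- Minimal idempotent modules of finite groups are trivial: Let G be a finite group, k a commutative semiring with unit, and M a module over the monoid algebra MonoidAlgebra k G whose lattice of submodules is a simple order (M is nontrivial and its only MonoidAlgebra k G-submodules are 0 and M), and whose addition is idempotent (m + m = m for all m ∈ M). Then G acts trivially on M: for every g ∈ G and m ∈ M, (MonoidAlgebra.of k G g) • m = m; moreover M is a cyclic k-module: there exists m₀ ∈ M such that every m ∈ M has the form m = (MonoidAlgebra.single (1 : G) c) • m₀ for some c ∈ k. -/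
/-!
For `m ≠ 0` the orbit sum `n = ∑ g, g • m` is `G`-invariant. It is nonzero: `m` is one of its
summands, so idempotency gives `m + n = n`, and `n = 0` would force `m = 0`. By minimality `n`
generates `M`, and since `G` fixes `n` an element of the group algebra acts on `n` through a
scalar of `k`. Hence `M = k n`, and as scalars commute with `G`, the action on `M` is trivial.
-/

/-- On a `G`-fixed vector, the group algebra acts through scalars of `k`
(the scalar being the augmentation). -/
lemma exists_scalar_smul_of_fixed {G k M : Type*} [Group G] [CommSemiring k] [AddCommMonoid M]
    [Module (MonoidAlgebra k G) M] {n : M} (hn : ∀ g : G, MonoidAlgebra.of k G g • n = n)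
    (a : MonoidAlgebra k G) : ∃ c : k, a • n = MonoidAlgebra.single (1 : G) c • n := by
  induction a using MonoidAlgebra.induction_linear with
  | zero => exact ⟨0, by simp⟩
  | add a b ha hb =>
    obtain ⟨c, hc⟩ := ha
    obtain ⟨d, hd⟩ := hb
    exact ⟨c + d, by rw [add_smul, hc, hd, MonoidAlgebra.single_add, add_smul]⟩
  | single g r =>
    refine ⟨r, ?_⟩
    have h : MonoidAlgebra.single g r
        = MonoidAlgebra.single (1 : G) r * MonoidAlgebra.of k G g := by
      simp [MonoidAlgebra.of_apply, MonoidAlgebra.single_mul_single]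
    rw [h, mul_smul, hn]

/-- A minimal module with idempotent addition over the group algebra of a finite
group has trivial `G`-action and is a cyclic `k`-module. -/
theorem minimal_idempotent_module_of_group_trivial {G k M : Type*} [Group G]
    [Finite G] [CommSemiring k] [AddCommMonoid M]
    [Module (MonoidAlgebra k G) M]
    (hmin : IsSimpleOrder (Submodule (MonoidAlgebra k G) M))
    (hidem : ∀ m : M, m + m = m) :
    (∀ (g : G) (m : M), (MonoidAlgebra.of k G g) • m = m) ∧
    (∃ m₀ : M, ∀ m : M, ∃ c : k, m = (MonoidAlgebra.single (1 : G) c) • m₀) := by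
  classical
  have := Fintype.ofFinite G
  obtain ⟨m, -, hm⟩ := (Submodule.ne_bot_iff (⊤ : Submodule (MonoidAlgebra k G) M)).1 top_ne_bot
  set n : M := ∑ g : G, MonoidAlgebra.of k G g • m with hn
  have hfix : ∀ g : G, MonoidAlgebra.of k G g • n = n := by
    intro g
    rw [hn, Finset.smul_sum]
    simp_rw [← mul_smul, ← map_mul]
    exact Fintype.sum_equiv (Equiv.mulLeft g) _ _ fun _ => rfl
  have habs : m + n = n := by
    rw [hn, ← Finset.add_sum_erase _ _ (Finset.mem_univ (1 : G)), map_one, one_smul,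
      ← add_assoc, hidem]
  have hn0 : n ≠ 0 := fun h => hm (by simpa [h] using habs)
  have htop : Submodule.span (MonoidAlgebra k G) {n} = ⊤ :=
    (eq_bot_or_eq_top _).resolve_left fun h => hn0 (Submodule.span_singleton_eq_bot.1 h)
  have hcyc : ∀ x : M, ∃ c : k, x = MonoidAlgebra.single (1 : G) c • n := by
    intro x
    obtain ⟨a, rfl⟩ := Submodule.mem_span_singleton.1 (htop ▸ Submodule.mem_top : x ∈ _)
    exact exists_scalar_smul_of_fixed hfix a
  refine ⟨fun g x => ?_, n, hcyc⟩
  obtain ⟨c, rfl⟩ := hcyc x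
  have hcomm : MonoidAlgebra.of k G g * MonoidAlgebra.single (1 : G) c
      = MonoidAlgebra.single (1 : G) c * MonoidAlgebra.of k G g := by
    simp [MonoidAlgebra.of_apply, MonoidAlgebra.single_mul_single]
  rw [← mul_smul, hcomm, mul_smul, hfix]
end

section
/- A faithful irreducible module with idempotent addition forces a trivial maximal subgroup at the apex: Let S be a finite semigroup, k a commutative semiring with unit, M a k-module with idempotent addition (m + m = m for all m ∈ M), and ρ : S → End_k(M) a representation of S on M which is faithful and irreducible. Let e ∈ S be an idempotent (e*e = e) which is an apex of M. Then the maximal subgroup of S at e is trivial: for every s ∈ S, if e*s*e is J-equivalent to e (that is, e*s*e ≤_J e and e ≤_J e*s*e), then e*s*e = e. -/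
/-- The local monoid `eSe` at `e`, encoded as the elements for which `e` is a two-sided
identity. -/
def LocalMonoid {S : Type*} [Semigroup S] (e : S) : Type _ :=
  {x : S // e * x = x ∧ x * e = x}

/-- The local monoid `eSe` has identity `e` when `e` is idempotent. -/
@[reducible] def LocalMonoid.monoid {S : Type*} [Semigroup S] {e : S} (he : e * e = e) :
    Monoid (LocalMonoid e) where
  mul x y := ⟨x.1 * y.1, by rw [← mul_assoc, x.2.1], by rw [mul_assoc, y.2.2]⟩
  mul_assoc x y z := Subtype.ext (mul_assoc x.1 y.1 z.1)
  one := ⟨e, he, he⟩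
  one_mul x := Subtype.ext x.2.1
  mul_one x := Subtype.ext x.2.2

/-- The element `e * s * e` of the local monoid. -/
def LocalMonoid.compress {S : Type*} [Semigroup S] {e : S} (he : e * e = e) (s : S) :
    LocalMonoid e :=
  ⟨e * s * e, by simp only [← mul_assoc, he], by simp only [mul_assoc, he]⟩

/-- An element of `eSe` that lies `J`-above `e` factors `e` inside `eSe`. -/
lemma exists_factor_of_jLe {S : Type*} [Semigroup S] {e : S} (he : e * e = e)
    (x : LocalMonoid e) (h : JLe e x.1) :
    ∃ a b : LocalMonoid e, a.1 * x.1 * b.1 = e := by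
  obtain ⟨hl, hr⟩ := x.2
  have key : ∀ a b : S, e = a * x.1 * b → ∃ a b : LocalMonoid e, a.1 * x.1 * b.1 = e := by
    intro a b hab
    refine ⟨.compress he a, .compress he b, ?_⟩
    calc e * a * e * x.1 * (e * b * e) = e * (a * ((e * x.1) * e) * b) * e := by
          simp only [mul_assoc]
      _ = e := by rw [hl, hr, ← hab, he, he]
  rcases h with h | ⟨a, h⟩ | ⟨b, h⟩ | ⟨a, b, h⟩
  · exact key e e (by rw [hl, hr]; exact h)
  · exact key a e (by rw [mul_assoc, hr]; exact h)
  · exact key e b (by rw [hl]; exact h)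
  · exact key a b h

/-- In a finite semigroup, an element of `eSe` that lies `J`-above `e` is a unit of `eSe`. -/
lemma isUnit_of_jLe {S : Type*} [Semigroup S] [Finite S] {e : S} (he : e * e = e)
    (x : LocalMonoid e) (h : JLe e x.1) :
    letI := LocalMonoid.monoid he
    IsUnit x := by
  let _ := LocalMonoid.monoid he
  have : Finite (LocalMonoid e) := Subtype.finite
  obtain ⟨a, b, hab⟩ := exists_factor_of_jLe he x h
  have h1 : a * x * b = 1 := Subtype.ext hab
  -- Finite monoids are Dedekind-finite, so the right inverse `b` of `a * x` is also a left inverse.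
  have h2 : (b * a) * x = 1 := by rw [mul_assoc]; exact mul_eq_one_symm h1
  exact IsUnit.of_mul_eq_one_right _ h2

/-- If a finite semigroup has a faithful irreducible module with idempotent
addition, then the maximal subgroup at an idempotent apex `e` is trivial. -/
theorem faithful_irreducible_idempotent_addition_aperiodic_apex {S k M : Type*}
    [Semigroup S] [Finite S] [CommSemiring k] [AddCommMonoid M] [Module k M]
    (hidem : ∀ m : M, m + m = m)
    (ρ : S → Module.End k M)
    (hρ : ∀ s t : S, ρ (s * t) = ρ t * ρ s)
    (hfaithful : ∀ s t : S, (∀ m : M, ρ s m = ρ t m) → s = t)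
    (hnz : ∃ (s : S) (m : M), ρ s m ≠ 0)
    (hnontriv : Nontrivial M)
    (hmin : ∀ N : Submodule k M, (∀ s : S, ∀ m ∈ N, ρ s m ∈ N) → N = ⊥ ∨ N = ⊤)
    (hsimple : ∀ r : M → M → Prop,
      Equivalence r →
      (∀ x y z : M, r x y → r (x + z) (y + z)) →
      (∀ (c : k) (x y : M), r x y → r (c • x) (c • y)) →
      (∀ (s : S) (x y : M), r x y → r (ρ s x) (ρ s y)) →
      (∀ x y : M, r x y → x = y) ∨ (∀ x y : M, r x y))
    (e : S) (he : e * e = e)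
    (hapex : ∀ s : S, ρ s = 0 ↔ ¬ JLe e s) :
    ∀ s : S, (JLe (e * s * e) e ∧ JLe e (e * s * e)) → e * s * e = e := by
  classical
  intro s ⟨_, hs⟩
  let _ := LocalMonoid.monoid he
  have : Finite (LocalMonoid e) := Subtype.finite
  have : Fintype (LocalMonoid e)ˣ := Fintype.ofFinite _
  have hmul : ∀ (s t : S) (m : M), ρ (s * t) m = ρ t (ρ s m) := fun s t m => by
    rw [hρ]; rfl
  have hne : ρ e ≠ 0 := fun h => (hapex e).1 h (Or.inl rfl)
  obtain ⟨m, hm⟩ : ∃ m, ρ e m ≠ 0 := by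
    by_contra! h
    exact hne (LinearMap.ext h)
  obtain ⟨n, hn⟩ : ∃ n, n = ∑ u : (LocalMonoid e)ˣ, ρ u.1.1 m := ⟨_, rfl⟩
  have hfix : ∀ g : (LocalMonoid e)ˣ, ρ g.1.1 n = n := by
    intro g
    rw [hn, map_sum]
    refine Fintype.sum_equiv (Equiv.mulRight g) _ _ fun u => ?_
    exact (hmul _ _ _).symm
  have hefix : ρ e n = n := hfix 1
  have habs : ρ e m + n = n := by
    rw [hn, ← Finset.add_sum_erase _ _ (Finset.mem_univ (1 : (LocalMonoid e)ˣ)), ← add_assoc]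
    congr 1
    exact hidem _
  have hn0 : n ≠ 0 := by
    intro h
    rw [h, add_zero] at habs
    exact hm habs
  have hspan : Submodule.span k ({n} ∪ Set.range fun t => ρ t n) = ⊤ := by
    refine (hmin _ ?_).resolve_left ?_
    · intro t x hx
      induction hx using Submodule.span_induction with
      | mem x hx =>
        apply Submodule.subset_span
        rcases hx with rfl | ⟨u, rfl⟩
        · exact Or.inr ⟨t, rfl⟩
        · exact Or.inr ⟨u * t, hmul _ _ _⟩
      | zero => simp
      | add x y _ _ hx hy => rw [map_add]; exact add_mem hx hy
      | smul c x _ hx => rw [map_smul]; exact Submodule.smul_mem _ _ hx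
    · intro h
      have : n ∈ Submodule.span k ({n} ∪ Set.range fun t => ρ t n) :=
        Submodule.subset_span (Or.inl rfl)
      rw [h] at this
      exact hn0 ((Submodule.mem_bot k).1 this)
  obtain ⟨g, hg⟩ := isUnit_of_jLe he (.compress he s) hs
  have hgv : g.1.1 = e * s * e := congrArg Subtype.val hg
  rw [← hgv]
  refine hfaithful _ _ fun x => ?_
  have hx : x ∈ Submodule.span k ({n} ∪ Set.range fun t => ρ t n) := hspan ▸ Submodule.mem_top
  induction hx using Submodule.span_induction with
  | mem x hx =>
    rcases hx with rfl | ⟨t, rfl⟩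
    · rw [hfix, hefix]
    · have hete : ρ e (ρ t n) = ρ (e * t * e) n := by rw [hmul, hmul, hefix]
      have hge : ρ g.1.1 (ρ t n) = ρ g.1.1 (ρ e (ρ t n)) := by rw [← hmul e, g.1.2.1]
      change ρ g.1.1 (ρ t n) = ρ e (ρ t n)
      rw [hge, hete]
      by_cases ht : JLe e (e * t * e)
      · obtain ⟨v, hv⟩ := isUnit_of_jLe he (.compress he t) ht
        have hvv : v.1.1 = e * t * e := congrArg Subtype.val hv
        rw [← hvv, hfix, hfix]
      · rw [(hapex _).2 ht]
        simp
  | zero => simp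
  | add x y _ _ hx hy => rw [map_add, map_add, hx, hy]
  | smul c x _ hx => rw [map_smul, map_smul, hx]
end

section
/- Boolean Stone–Weierstrass: Let M be a finite join semilattice with minimum ⊥. Let N be a set of functionals on M which contains the constant-false functional and is closed under pointwise join (f, g ∈ N implies the functional x ↦ f(x) ∨ g(x) is in N). Then N contains every functional on M if and only if N separates the points of M (for all a ≠ b in M there exists f ∈ N with f(a) ≠ f(b)). -/
/-!
On a finite join semilattice the kernel `{x | f x = false}` of a functional `f` has a greatest
element `m`, so `f x = false ↔ x ≤ m` (`exists_kernel_top`); conversely every `m` arises from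
the functional `x ↦ ¬ x ≤ m`, and these separate points.

Suppose that `N` separates points and let `f` be a functional with kernel top `m`. The members of
`N` vanishing at `m` form a finite join-closed family, so it has a greatest element `g`; let `s` be
the kernel top of `g`, so `m ≤ s`. A member `h` of `N` separating `m` from `s` would, by
monotonicity, satisfy `h m = false` and `h s = true`, contradicting `h ≤ g` and `g s = false`.
Hence `s = m`, and `f = g` lies in `N`.
-/

theorem exists_isGreatest_of_sup_mem {α : Type*} [SemilatticeSup α] [OrderBot α] [Finite α]
    (s : Set α) (hbot : ⊥ ∈ s) (hsup : ∀ x ∈ s, ∀ y ∈ s, x ⊔ y ∈ s) : ∃ m, IsGreatest s m := by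
  classical
  have hs : s.Finite := s.toFinite
  refine ⟨hs.toFinset.sup id, Finset.sup_mem s hbot hsup _ _ fun i hi => by simpa using hi, ?_⟩
  intro x hx
  exact Finset.le_sup (f := id) (by simpa using hx)

theorem exists_kernel_top {M : Type*} [SemilatticeSup M] [OrderBot M] [Finite M] {f : M → Bool}
    (hf : (∀ x y : M, f (x ⊔ y) = (f x || f y)) ∧ f ⊥ = false) :
    ∃ m, ∀ x, f x = false ↔ x ≤ m := by
  obtain ⟨m, hm, hle⟩ := exists_isGreatest_of_sup_mem {x | f x = false} hf.2
    (fun x hx y hy => by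
      simp only [Set.mem_ofPred_eq] at hx hy ⊢
      rw [hf.1, hx, hy]; rfl)
  refine ⟨m, fun x => ⟨fun hx => hle hx, fun hx => ?_⟩⟩
  have h := hf.1 x m
  rw [sup_eq_right.2 hx, show f m = false from hm] at h
  simpa using h.symm

/-- Boolean Stone–Weierstrass: a set of functionals on a finite join semilattice
with minimum, containing the constant-false functional and closed under pointwise
join, contains every functional iff it separates points. -/
theorem boolean_stone_weierstrass {M : Type*} [SemilatticeSup M] [OrderBot M]
    [Finite M] (N : Set (M → Bool))
    (hfun : ∀ f ∈ N, (∀ x y : M, f (x ⊔ y) = (f x || f y)) ∧ f ⊥ = false)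
    (hbot : (fun _ : M => false) ∈ N)
    (hjoin : ∀ f ∈ N, ∀ g ∈ N, (fun x : M => f x || g x) ∈ N) :
    (∀ f : M → Bool, ((∀ x y : M, f (x ⊔ y) = (f x || f y)) ∧ f ⊥ = false) → f ∈ N)
      ↔ (∀ a b : M, a ≠ b → ∃ f ∈ N, f a ≠ f b) := by
  classical
  constructor
  · intro hall a b hab
    -- The functional `x ↦ ¬ x ≤ c`, used for `c = a` or `c = b`.
    have key : ∀ c : M, (fun x : M => !decide (x ≤ c)) ∈ N := fun c =>
      hall _ ⟨fun x y => by simp [sup_le_iff], by simp⟩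
    by_cases h : a ≤ b
    · have h' : ¬ b ≤ a := fun h' => hab (le_antisymm h h')
      exact ⟨_, key a, by simp [h']⟩
    · exact ⟨_, key b, by simp [h]⟩
  · intro hsep f hf
    obtain ⟨m, hm⟩ := exists_kernel_top hf
    obtain ⟨g, ⟨hgN, hgm⟩, hgmax⟩ :=
      exists_isGreatest_of_sup_mem {h : M → Bool | h ∈ N ∧ h m = false} ⟨hbot, rfl⟩
        (fun h₁ H₁ h₂ H₂ => ⟨hjoin h₁ H₁.1 h₂ H₂.1, by
          change (h₁ m || h₂ m) = false
          rw [H₁.2, H₂.2]; rfl⟩)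
    obtain ⟨s, hs⟩ := exists_kernel_top (hfun g hgN)
    have hms : m ≤ s := (hs m).1 hgm
    have hsm : m = s := by
      by_contra hne
      obtain ⟨h, hN, hh⟩ := hsep m s hne
      obtain ⟨t, ht⟩ := exists_kernel_top (hfun h hN)
      have hm0 : h m = false := by
        by_contra hm1
        have hs1 : h s ≠ false := fun h0 => hm1 ((ht m).2 (hms.trans ((ht s).1 h0)))
        simp only [ne_eq, Bool.not_eq_false] at hm1 hs1
        exact hh (hm1.trans hs1.symm)
      have hle : h s ≤ g s := hgmax ⟨hN, hm0⟩ s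
      rw [(hs s).2 le_rfl] at hle
      exact hh (hm0.trans (le_bot_iff.1 hle).symm)
    have hfg : f = g := by
      funext x
      rw [Bool.eq_iff_iff, ← not_iff_not, Bool.not_eq_true, Bool.not_eq_true, hm, hs, hsm]
    exact hfg ▸ hgN
end

section
/- Duality between simple and minimal boolean modules: Let S be a finite semigroup and (M, ρ) a finite boolean S-module. Let M^op be the set of functionals on M, which is a join semilattice under pointwise ∨ with minimum the constant-false functional, equipped with the left S-action s·f = f ∘ ρ(s). Then: (a) M is simple if and only if M^op is minimal, i.e., every subset N of M^op containing the constant-false functional, closed under pointwise join and under f ↦ f ∘ ρ(s) for all s ∈ S, and containing some functional that is not constant-false, equals all of M^op; and (b) M is minimal if and only if M^op is simple, i.e., every equivalence relation ~ on M^op satisfying f ~ g → (f ∨ h) ~ (g ∨ h) for all h ∈ M^op and f ~ g → (f ∘ ρ(s)) ~ (g ∘ ρ(s)) for all s ∈ S is trivial (f ~ g → f = g) or full. -/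
/-!
Each `a : M` gives a functional `x ↦ ¬ x ≤ a`, and, `M` being finite, every functional has this
form, with `a` the greatest zero of the functional. Thus `Mᵒᵖ` is `M` with the order reversed, and
the pairing `(f, x) ↦ f x` is perfect: functionals separate points, and points separate functionals.

The duality between congruences and submodules is passage to annihilators with respect to this
pairing. Given a submodule `N` on one side, agreement on `N` is a congruence on the other side; it
is not full when `N` is nonzero, and when it is trivial `N` is everything
(`mem_of_separating`, `mem_of_separating_functionals`). Conversely, given a congruence on one side,
the elements of the other side that cannot distinguish congruent elements form a submodule; if it is
everything the congruence is trivial, and if the congruence is not full the submodule has the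
nonzero element that vanishes exactly on the class of the minimum.
-/

/-- A functional on a join semilattice with minimum. -/
def IsFunctional {M : Type*} [SemilatticeSup M] [OrderBot M] (f : M → Bool) : Prop :=
  (∀ x y : M, f (x ⊔ y) = (f x || f y)) ∧ f ⊥ = false

theorem exists_isGreatest_of_sup_closed {α : Type*} [SemilatticeSup α] [Finite α] (A : Set α)
    (hne : A.Nonempty) (hA : ∀ x ∈ A, ∀ y ∈ A, x ⊔ y ∈ A) : ∃ a, IsGreatest A a := by
  obtain ⟨m, hm⟩ := (Set.toFinite A).exists_maximal hne
  refine ⟨m, hm.prop, fun y hy => ?_⟩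
  exact le_sup_right.trans (hm.le_of_ge (hA m hm.prop y hy) le_sup_left)

section

variable {M : Type*} [SemilatticeSup M] [OrderBot M]

theorem IsFunctional.zero : IsFunctional (fun _ : M => false) := ⟨fun _ _ => rfl, rfl⟩

theorem IsFunctional.or {f g : M → Bool} (hf : IsFunctional f) (hg : IsFunctional g) :
    IsFunctional (fun x => f x || g x) := by
  refine ⟨fun x y => ?_, ?_⟩
  · simp only [hf.1, hg.1]
    cases f x <;> cases f y <;> cases g x <;> cases g y <;> rfl
  · simp [hf.2, hg.2]

theorem IsFunctional.comp {f : M → Bool} (hf : IsFunctional f) {φ : M → M}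
    (hsup : ∀ x y, φ (x ⊔ y) = φ x ⊔ φ y) (hbot : φ ⊥ = ⊥) : IsFunctional (f ∘ φ) :=
  ⟨fun x y => by simp [hsup, hf.1], by simp [hbot, hf.2]⟩

theorem IsFunctional.eq_false_of_le {f : M → Bool} (hf : IsFunctional f) {x y : M} (h : x ≤ y)
    (hy : f y = false) : f x = false := by
  have := hf.1 x y
  rw [sup_eq_right.2 h, hy] at this
  exact (Bool.or_eq_false_iff.1 this.symm).1

open Classical in
/-- The functional whose zeros are exactly the elements below `a`. -/
noncomputable def nonBelow {M : Type*} [SemilatticeSup M] (a : M) : M → Bool := fun x => decide (¬ x ≤ a)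

theorem nonBelow_eq_false {M : Type*} [SemilatticeSup M] {a x : M} : nonBelow a x = false ↔ x ≤ a := by
  simp [nonBelow]

theorem isFunctional_nonBelow (a : M) : IsFunctional (nonBelow a) := by
  refine ⟨fun x y => ?_, nonBelow_eq_false.2 bot_le⟩
  rw [Bool.eq_iff_iff, ← not_iff_not]
  simp [nonBelow_eq_false]

theorem nonBelow_injective {M : Type*} [SemilatticeSup M] {a b : M} (h : nonBelow a = nonBelow b) : a = b := by
  apply le_antisymm
  · rw [← nonBelow_eq_false, ← h, nonBelow_eq_false]
  · rw [← nonBelow_eq_false, h, nonBelow_eq_false]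

theorem eq_of_functionals_agree {x y : M} (h : ∀ f : M → Bool, IsFunctional f → f x = f y) :
    x = y := by
  apply le_antisymm
  · rw [← nonBelow_eq_false, h _ (isFunctional_nonBelow y), nonBelow_eq_false]
  · rw [← nonBelow_eq_false, ← h _ (isFunctional_nonBelow x), nonBelow_eq_false]

theorem IsFunctional.exists_greatest_zero [Finite M] {f : M → Bool} (hf : IsFunctional f) :
    ∃ a, ∀ x, f x = false ↔ x ≤ a := by
  obtain ⟨a, ha, ha'⟩ := exists_isGreatest_of_sup_closed {x | f x = false} ⟨⊥, hf.2⟩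
    (fun x hx y hy => by simp_all [hf.1])
  exact ⟨a, fun x => ⟨fun hx => ha' hx, fun hx => hf.eq_false_of_le hx ha⟩⟩

/-- A join-closed set of functionals that separates points contains every functional `g`: with `a`
the greatest zero of `g`, the largest member vanishing at `a` is `g`. -/
theorem mem_of_separating [Finite M] (N : Set (M → Bool)) (hN : ∀ f ∈ N, IsFunctional f)
    (h0 : (fun _ : M => false) ∈ N)
    (hor : ∀ f ∈ N, ∀ g ∈ N, (fun x : M => f x || g x) ∈ N)
    (hsep : ∀ x y, (∀ f ∈ N, f x = f y) → x = y) (g : M → Bool) (hg : IsFunctional g) :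
    g ∈ N := by
  obtain ⟨a, ha⟩ := hg.exists_greatest_zero
  obtain ⟨h, ⟨hhN, hha⟩, hmax⟩ :=
    exists_isGreatest_of_sup_closed {f | f ∈ N ∧ f a = false} ⟨_, h0, rfl⟩
      (fun f hf k hk => ⟨hor f hf.1 k hk.1, by simp [hf.2, hk.2]⟩)
  suffices g = h from this ▸ hhN
  funext x
  rw [Bool.eq_iff_iff, ← not_iff_not]
  simp only [Bool.not_eq_true]
  rw [ha]
  refine ⟨fun hx => (hN h hhN).eq_false_of_le hx hha, fun hx => ?_⟩
  -- No member of `N` distinguishes `x ⊔ a` from `a`.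
  refine sup_eq_right.1 (hsep _ _ fun f hf => ?_)
  rw [(hN f hf).1]
  cases hfa : f a
  · have : f x ≤ h x := hmax ⟨hf, hfa⟩ x
    rw [hx] at this
    simpa using (le_bot_iff.1 this : f x = false)
  · simp

/-- A join-closed subset of `M` that separates functionals contains every `y`: the greatest
member below `y` and `y` itself define functionals agreeing on the subset. -/
theorem mem_of_separating_functionals [Finite M] (N : Set M) (h0 : ⊥ ∈ N)
    (hor : ∀ x ∈ N, ∀ y ∈ N, x ⊔ y ∈ N)
    (hsep : ∀ f g : M → Bool, IsFunctional f → IsFunctional g → (∀ x ∈ N, f x = g x) → f = g)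
    (y : M) : y ∈ N := by
  obtain ⟨n, ⟨hn, hny⟩, hmax⟩ :=
    exists_isGreatest_of_sup_closed {x | x ∈ N ∧ x ≤ y} ⟨_, h0, bot_le⟩
      (fun x hx z hz => ⟨hor x hx.1 z hz.1, sup_le hx.2 hz.2⟩)
  suffices n = y from this ▸ hn
  refine nonBelow_injective
    (hsep _ _ (isFunctional_nonBelow n) (isFunctional_nonBelow y) fun x hx => ?_)
  rw [Bool.eq_iff_iff, ← not_iff_not]
  simp only [Bool.not_eq_true, nonBelow_eq_false]
  exact ⟨fun h => h.trans hny, fun h => hmax ⟨hx, h⟩⟩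

end

/-- Duality for boolean modules over a finite semigroup: `M` is simple iff the
dual module `Mᵒᵖ` of functionals is minimal, and `M` is minimal iff `Mᵒᵖ` is
simple. -/
theorem boolean_module_duality {S M : Type*} [Semigroup S] [Finite S]
    [SemilatticeSup M] [OrderBot M] [Finite M]
    (ρ : S → M → M)
    (hsup : ∀ (s : S) (x y : M), ρ s (x ⊔ y) = ρ s x ⊔ ρ s y)
    (hbot : ∀ s : S, ρ s ⊥ = ⊥)
    (hmul : ∀ s t : S, ρ (s * t) = ρ t ∘ ρ s) :
    -- (a) M is simple iff Mᵒᵖ is minimal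
    ((∀ r : M → M → Prop,
        Equivalence r →
        (∀ x y z : M, r x y → r (x ⊔ z) (y ⊔ z)) →
        (∀ (s : S) (x y : M), r x y → r (ρ s x) (ρ s y)) →
        (∀ x y : M, r x y → x = y) ∨ (∀ x y : M, r x y)) ↔
      (∀ N : Set (M → Bool),
        (∀ f ∈ N, IsFunctional f) →
        (fun _ : M => false) ∈ N →
        (∀ f ∈ N, ∀ g ∈ N, (fun x : M => f x || g x) ∈ N) →
        (∀ f ∈ N, ∀ s : S, (f ∘ ρ s) ∈ N) →
        (∃ f ∈ N, f ≠ (fun _ : M => false)) →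
        ∀ g : M → Bool, IsFunctional g → g ∈ N)) ∧
    -- (b) M is minimal iff Mᵒᵖ is simple
    ((∀ N : Set M,
        (⊥ : M) ∈ N →
        (∀ x ∈ N, ∀ y ∈ N, x ⊔ y ∈ N) →
        (∀ x ∈ N, ∀ s : S, ρ s x ∈ N) →
        (∃ x ∈ N, x ≠ (⊥ : M)) →
        ∀ y : M, y ∈ N) ↔
      (∀ r : (M → Bool) → (M → Bool) → Prop,
        (∀ f, IsFunctional f → r f f) →
        (∀ f g, IsFunctional f → IsFunctional g → r f g → r g f) →
        (∀ f g h, IsFunctional f → IsFunctional g → IsFunctional h →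
          r f g → r g h → r f h) →
        (∀ f g h, IsFunctional f → IsFunctional g → IsFunctional h →
          r f g → r (fun x => f x || h x) (fun x => g x || h x)) →
        (∀ f g, IsFunctional f → IsFunctional g → ∀ s : S,
          r f g → r (f ∘ ρ s) (g ∘ ρ s)) →
        (∀ f g, IsFunctional f → IsFunctional g → r f g → f = g) ∨
          (∀ f g, IsFunctional f → IsFunctional g → r f g))) := by
  refine ⟨⟨?_, ?_⟩, ⟨?_, ?_⟩⟩
  · intro hsimple N hN h0 hor hact ⟨f, hfN, hf0⟩ g hg
    refine mem_of_separating N hN h0 hor ?_ g hg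
    rcases hsimple (fun x y => ∀ f ∈ N, f x = f y)
      ⟨fun _ _ _ => rfl, fun h f hf => (h f hf).symm,
        fun h h' f hf => (h f hf).trans (h' f hf)⟩
      (fun x y z h f hf => by rw [(hN f hf).1, (hN f hf).1, h f hf])
      (fun s x y h f hf => h _ (hact f hf s)) with htriv | hfull
    · exact htriv
    · exact absurd (funext fun x => (hfull x ⊥ f hfN).trans (hN f hfN).2) hf0
  · intro hmin r hr hrsup hract
    by_cases hfull : ∀ x, r x ⊥
    · exact Or.inr fun x y => hr.trans (hfull x) (hr.symm (hfull y))
    left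
    push Not at hfull
    obtain ⟨x₀, hx₀⟩ := hfull
    classical
    have hdown : ∀ x y, r (x ⊔ y) ⊥ → r x ⊥ := fun x y h => by
      have h1 := hrsup _ _ x h
      rw [sup_eq_left.2 (le_sup_left : x ≤ x ⊔ y), bot_sup_eq] at h1
      exact hr.trans (hr.symm h1) h
    -- The functional vanishing exactly on the class of `⊥`.
    let F : M → Bool := fun x => decide (¬ r x ⊥)
    have hF : ∀ x, F x = false ↔ r x ⊥ := fun x => by simp [F]
    have hFfun : IsFunctional F := by
      refine ⟨fun x y => ?_, (hF ⊥).2 (hr.refl _)⟩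
      rw [Bool.eq_iff_iff, ← not_iff_not]
      simp only [Bool.not_eq_true, Bool.or_eq_false_iff, hF]
      refine ⟨fun h => ⟨hdown x y h, hdown y x (sup_comm x y ▸ h)⟩, fun h => ?_⟩
      have h1 := hrsup _ _ y h.1
      rw [bot_sup_eq] at h1
      exact hr.trans h1 h.2
    have hall := hmin {f | IsFunctional f ∧ ∀ x y, r x y → f x = f y}
      (fun f hf => hf.1) ⟨IsFunctional.zero, fun _ _ _ => rfl⟩
      (fun f hf g hg => ⟨hf.1.or hg.1, fun x y h => by simp only [hf.2 x y h, hg.2 x y h]⟩)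
      (fun f hf s => ⟨hf.1.comp (hsup s) (hbot s), fun x y h => hf.2 _ _ (hract s x y h)⟩)
      ⟨F, ⟨hFfun, fun x y h => by
          rw [Bool.eq_iff_iff, ← not_iff_not]
          simp only [Bool.not_eq_true, hF]
          exact ⟨hr.trans (hr.symm h), hr.trans h⟩⟩,
        fun h => hx₀ ((hF x₀).1 (congrFun h x₀))⟩
    exact fun x y h => eq_of_functionals_agree fun f hf => (hall f hf).2 x y h
  · intro hmin r hrefl hsymm htrans hror hract
    by_cases hfull : ∀ f, IsFunctional f → r f (fun _ => false)
    · exact Or.inr fun f g hf hg => htrans _ _ _ hf IsFunctional.zero hg (hfull f hf)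
        (hsymm _ _ hg IsFunctional.zero (hfull g hg))
    left
    -- `F` is the greatest functional in the class of zero, and `b` its greatest zero.
    obtain ⟨F, ⟨hFfun, hF0⟩, hFmax⟩ := exists_isGreatest_of_sup_closed
      {f : M → Bool | IsFunctional f ∧ r f (fun _ => false)}
      ⟨_, IsFunctional.zero, hrefl _ IsFunctional.zero⟩
      (fun f hf g hg => ⟨hf.1.or hg.1, by
        have h1 := hror f _ g hf.1 IsFunctional.zero hg.1 hf.2
        simp only [Bool.false_or] at h1
        exact htrans _ _ _ (hf.1.or hg.1) hg.1 IsFunctional.zero h1 hg.2⟩)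
    obtain ⟨b, hb⟩ := hFfun.exists_greatest_zero
    have key : ∀ f, IsFunctional f → (f b = false ↔ r f (fun _ => false)) := by
      intro f hf
      constructor
      · intro hfb
        have h1 := hror _ _ f hFfun IsFunctional.zero hf hF0
        have h2 : (fun x => F x || f x) = F := by
          funext x
          cases hx : F x
          · simp [hf.eq_false_of_le ((hb x).1 hx) hfb]
          · simp
        simp only [h2, Bool.false_or] at h1
        exact htrans _ _ _ hf hFfun IsFunctional.zero (hsymm _ _ hFfun hf h1) hF0
      · intro h
        have h1 : f b ≤ F b := hFmax ⟨hf, h⟩ b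
        rw [(hb b).2 le_rfl] at h1
        exact le_bot_iff.1 h1
    have hall := hmin {x | ∀ f g, IsFunctional f → IsFunctional g → r f g → f x = g x}
      (fun f g hf hg _ => hf.2.trans hg.2.symm)
      (fun x hx y hy f g hf hg h => by rw [hf.1, hg.1, hx f g hf hg h, hy f g hf hg h])
      (fun x hx s f g hf hg h => hx _ _ (hf.comp (hsup s) (hbot s)) (hg.comp (hsup s) (hbot s))
        (hract f g hf hg s h))
      ⟨b, fun f g hf hg h => by
          rw [Bool.eq_iff_iff, ← not_iff_not]
          simp only [Bool.not_eq_true]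
          rw [key f hf, key g hg]
          exact ⟨htrans _ _ _ hg hf IsFunctional.zero (hsymm _ _ hf hg h),
            htrans _ _ _ hf hg IsFunctional.zero h⟩,
        fun h => hfull fun f hf => (key f hf).1 (h ▸ hf.2)⟩
    exact fun f g hf hg h => funext fun x => hall x f g hf hg h
  · intro hsimple N h0 hor hact ⟨x, hxN, hx0⟩ y
    refine mem_of_separating_functionals N h0 hor ?_ y
    rcases hsimple (fun f g => ∀ x ∈ N, f x = g x)
      (fun _ _ _ _ => rfl) (fun _ _ _ _ h x hx => (h x hx).symm)
      (fun _ _ _ _ _ _ h h' x hx => (h x hx).trans (h' x hx))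
      (fun _ _ _ _ _ _ h x hx => by simp only [h x hx])
      (fun _ _ _ _ s h x hx => h _ (hact x hx s)) with htriv | hfull
    · exact htriv
    · have h1 := hfull _ _ (isFunctional_nonBelow ⊥) IsFunctional.zero x hxN
      exact absurd (le_bot_iff.1 (nonBelow_eq_false.1 h1)) hx0
end

section
/- Generalized characters are complex characters: Let S be a finite semigroup and (M, ρ) a finite boolean S-module with M ≠ {⊥}. Let D ⊆ M \ {⊥} be a subset containing every strictly join irreducible element of M and such that d ∈ D implies ρ(s)(d) ∈ D ∪ {⊥} for all s ∈ S. Then the generalized character ψ(s) = |{d ∈ D | ρ(s)(d) = d}| is a complex character of S: there is a finite-dimensional complex vector space V (one may take V = D → ℂ) and a map π : S → End_ℂ(V) with π(s*t) = π(t) ∘ π(s) for all s, t ∈ S and trace(π(s)) = ψ(s) for all s ∈ S. -/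
/-!
Since `D ∪ {⊥}` is stable under the action and every `ρ s` fixes `⊥`, each `s` acts on `D` by a
partial map. Sending the basis vector `e_d` to `e_{ρ s d}`, read as `0` when `ρ s d = ⊥`, therefore
defines a representation on the free space on `D`. Its matrices are 0-1 matrices, whose diagonal
entries equal to `1` sit exactly at the fixed points of `ρ s` in `D`, so the trace counts them.
-/

/-- Generalized characters of a finite boolean module are complex characters:
if `D` contains all strictly join irreducible elements, avoids `⊥`, and is
stable (up to `⊥`) under the action, then `ψ(s) = |{d ∈ D | ρ s d = d}|` is the
character of a complex representation of `S`. -/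
theorem generalized_character_is_complex_character {S M : Type*} [Semigroup S]
    [Finite S] [SemilatticeSup M] [OrderBot M] [Finite M]
    (ρ : S → M → M)
    (hsup : ∀ (s : S) (x y : M), ρ s (x ⊔ y) = ρ s x ⊔ ρ s y)
    (hbot : ∀ s : S, ρ s ⊥ = ⊥)
    (hmul : ∀ s t : S, ρ (s * t) = ρ t ∘ ρ s)
    (hM : ∃ m : M, m ≠ ⊥)
    (D : Set M)
    (hDbot : ∀ d ∈ D, d ≠ ⊥)
    (hDsji : ∀ m : M, (m ≠ ⊥ ∧ ∀ a b : M, m = a ⊔ b → m = a ∨ m = b) → m ∈ D)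
    (hDstable : ∀ d ∈ D, ∀ s : S, ρ s d ∈ D ∨ ρ s d = ⊥) :
    ∃ (V : Type) (_ : AddCommGroup V) (_ : Module ℂ V)
      (_ : FiniteDimensional ℂ V) (π : S → Module.End ℂ V),
      (∀ s t : S, π (s * t) = π t * π s) ∧
      (∀ s : S, LinearMap.trace ℂ V (π s) = ({d ∈ D | ρ s d = d}.ncard : ℂ)) := by
  classical
  -- `D` is indexed by `Fin n` because `V` must lie in `Type`, whereas `M` is in any universe.
  obtain ⟨n, ⟨e⟩⟩ := Finite.exists_equiv_fin D
  let b : Fin n → M := fun i => (e.symm i : M)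
  have hb : Function.Injective b := Subtype.val_injective.comp e.symm.injective
  have hbD : ∀ i, b i ∈ D := fun i => (e.symm i).2
  have hsurj : ∀ d ∈ D, ∃ i, b i = d := fun d hd => ⟨e ⟨d, hd⟩, by simp [b]⟩
  let A : S → Matrix (Fin n) (Fin n) ℂ := fun s =>
    Matrix.of fun i j => if ρ s (b j) = b i then 1 else 0
  have hA : ∀ s t, A (s * t) = A t * A s := by
    intro s t
    ext i j
    simp only [A, Matrix.mul_apply, Matrix.of_apply, hmul, Function.comp_apply]
    rcases hDstable _ (hbD j) s with h | h
    · obtain ⟨k, hk⟩ := hsurj _ h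
      simp [← hk, hb.eq_iff]
    · have h1 : ∀ k, ⊥ ≠ b k := fun k => (hDbot _ (hbD k)).symm
      simp [h, hbot, h1]
  refine ⟨Fin n → ℂ, inferInstance, inferInstance, inferInstance,
    fun s => Matrix.toLin' (A s), fun s t => ?_, fun s => ?_⟩
  · beta_reduce
    rw [hA, Matrix.toLin'_mul]
    rfl
  · have himg : {d ∈ D | ρ s d = d} =
        b '' ((Finset.univ.filter fun i => ρ s (b i) = b i : Finset (Fin n)) : Set (Fin n)) := by
      ext d
      constructor
      · rintro ⟨hd, hfix⟩
        obtain ⟨i, rfl⟩ := hsurj d hd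
        exact ⟨i, by simpa using hfix, rfl⟩
      · rintro ⟨i, hi, rfl⟩
        exact ⟨hbD i, by simpa using hi⟩
    rw [himg, Set.ncard_image_of_injective _ hb, Set.ncard_coe_finset, Matrix.trace_toLin'_eq]
    simp [A, Matrix.trace]
end

section
/- The maps e_{a,b} act irreducibly on a join semilattice: Let M be a join semilattice with minimum ⊥. For a, b ∈ M define e_{a,b} : M → M by e_{a,b}(x) = ⊥ if x ≤ a and e_{a,b}(x) = b otherwise. Then: (i) for every m ∈ M with m ≠ ⊥ and every n ∈ M there exist a, b ∈ M with e_{a,b}(m) = n (minimality); and (ii) every equivalence relation r on M such that r x y implies r (x ⊔ z) (y ⊔ z) for all z ∈ M and r (e_{a,b}(x)) (e_{a,b}(y)) for all a, b ∈ M, and such that r m n holds for some m ≠ n, satisfies r x y for all x, y ∈ M (simplicity). -/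
/-- The map `e_{a,b}` on a join semilattice with minimum: it sends `x` to `⊥`
if `x ≤ a` and to `b` otherwise. -/
noncomputable def eab {M : Type*} [SemilatticeSup M] [OrderBot M] (a b x : M) : M :=
  letI := Classical.dec (x ≤ a)
  if x ≤ a then ⊥ else b

/-- The maps `e_{a,b}` act irreducibly on a join semilattice with minimum:
(i) any nonzero element can be sent to any element (minimality), and (ii) every
nontrivial compatible equivalence relation is full (simplicity). -/
theorem eab_irreducible {M : Type*} [SemilatticeSup M] [OrderBot M] :
    (∀ m : M, m ≠ ⊥ → ∀ n : M, ∃ a b : M, eab a b m = n) ∧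
    (∀ r : M → M → Prop,
      Equivalence r →
      (∀ x y z : M, r x y → r (x ⊔ z) (y ⊔ z)) →
      (∀ (a b : M) (x y : M), r x y → r (eab a b x) (eab a b y)) →
      (∃ m n : M, m ≠ n ∧ r m n) →
      ∀ x y : M, r x y) := by
  refine ⟨fun m hm n => ⟨⊥, n, if_neg fun h => hm (le_bot_iff.mp h)⟩, ?_⟩
  rintro r hr - he ⟨m, n, hmn, h⟩
  -- If `r p q` with `p ≰ q`, then `e_{q,b}` sends `p` to `b` and `q` to `⊥`, so `r b ⊥`.
  have key : ∀ p q : M, ¬ p ≤ q → r p q → ∀ b, r b ⊥ := by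
    intro p q hpq hrel b
    have hb := he q b p q hrel
    rwa [show eab q b p = b from if_neg hpq, show eab q b q = ⊥ from if_pos le_rfl] at hb
  have hbot : ∀ b, r b ⊥ := by
    by_cases hle : m ≤ n
    · exact key n m (fun h' => hmn (le_antisymm hle h')) (hr.symm h)
    · exact key m n hle h
  exact fun x y => hr.trans (hbot x) (hr.symm (hbot y))
end

section
/- The image of an irreducible boolean representation spans a dense subsemiring: Let S be a finite semigroup and (M, ρ) a finite boolean S-module which is irreducible (both minimal and simple) and whose action is nonzero (ρ(s)(m) ≠ ⊥ for some s ∈ S, m ∈ M). Then for all a, b ∈ M there exists a finite subset F of S such that for every x ∈ M, the join ⊔_{s ∈ F} ρ(s)(x) equals ⊥ if x ≤ a and equals b otherwise. -/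
/-!
The maps `x ↦ ⊔_{s ∈ F} ρ s x` are closed under composition (`exists_sup_comp`), so it is enough
to write the map `e_{a,b}`, which sends `x` to `⊥` if `x ≤ a` and to `b` otherwise, as a composite
of three of them.

* Having the same annihilator in `S` is a congruence on `M`. It is not full because the action is
  nonzero, so by simplicity it is equality: an element is determined by its annihilator. Let `A` be
  the annihilator of `a`. If `A` annihilates `x`, then `a` and `x ⊔ a` have the same annihilator,
  so `x ≤ a`. Thus the join over `A` vanishes exactly on the elements `x ≤ a`.
* If `x ≠ ⊥`, then `x` is not annihilated by all of `S`, and by minimality every element of `M` is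
  a join of elements `ρ s x`. Hence the join over all of `S` sends every `x ≠ ⊥` to the top of `M`.
* For the same reason some join over a subset `H` sends the top to `b`.

Composing the three joins, over `A`, then `S`, then `H`, gives `e_{a,b}`.
-/

theorem map_finset_sup_of_action {S M : Type*} [SemilatticeSup M] [OrderBot M]
    (ρ : S → M → M)
    (hsup : ∀ (s : S) (x y : M), ρ s (x ⊔ y) = ρ s x ⊔ ρ s y)
    (hbot : ∀ s : S, ρ s ⊥ = ⊥) {ι : Type*} (t : S) (F : Finset ι) (f : ι → M) :
    ρ t (F.sup f) = F.sup (fun i => ρ t (f i)) :=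
  Finset.apply_sup_eq_sup_comp (ρ t) (hsup t) (hbot t)

theorem exists_sup_comp {S M : Type*} [Semigroup S] [SemilatticeSup M] [OrderBot M]
    (ρ : S → M → M)
    (hsup : ∀ (s : S) (x y : M), ρ s (x ⊔ y) = ρ s x ⊔ ρ s y)
    (hbot : ∀ s : S, ρ s ⊥ = ⊥)
    (hmul : ∀ s t : S, ρ (s * t) = ρ t ∘ ρ s) (F G : Finset S) :
    ∃ K : Finset S, ∀ x : M,
      K.sup (fun s => ρ s x) = G.sup (fun t => ρ t (F.sup (fun s => ρ s x))) := by
  classical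
  refine ⟨(G ×ˢ F).image (fun p => p.2 * p.1), fun x => ?_⟩
  rw [Finset.sup_image, Finset.sup_product_left]
  refine Finset.sup_congr rfl fun t _ => ?_
  rw [map_finset_sup_of_action ρ hsup hbot]
  refine Finset.sup_congr rfl fun s _ => ?_
  simp [hmul]

/-- The image of an irreducible boolean representation of a finite semigroup
spans a dense subsemiring: every map `e_{a,b}` is a join of images of elements
of `S`. -/
theorem irreducible_boolean_rep_spans_dense {S M : Type*} [Semigroup S] [Finite S]
    [SemilatticeSup M] [OrderBot M] [Finite M]
    (ρ : S → M → M)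
    (hsup : ∀ (s : S) (x y : M), ρ s (x ⊔ y) = ρ s x ⊔ ρ s y)
    (hbot : ∀ s : S, ρ s ⊥ = ⊥)
    (hmul : ∀ s t : S, ρ (s * t) = ρ t ∘ ρ s)
    (hnz : ∃ (s : S) (m : M), ρ s m ≠ ⊥)
    (hmin : ∀ N : Set M,
      (⊥ : M) ∈ N →
      (∀ x ∈ N, ∀ y ∈ N, x ⊔ y ∈ N) →
      (∀ x ∈ N, ∀ s : S, ρ s x ∈ N) →
      (∃ x ∈ N, x ≠ (⊥ : M)) →
      ∀ y : M, y ∈ N)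
    (hsimple : ∀ r : M → M → Prop,
      Equivalence r →
      (∀ x y z : M, r x y → r (x ⊔ z) (y ⊔ z)) →
      (∀ (s : S) (x y : M), r x y → r (ρ s x) (ρ s y)) →
      (∀ x y : M, r x y → x = y) ∨ (∀ x y : M, r x y)) :
    ∀ a b : M, ∃ F : Finset S, ∀ x : M,
      (x ≤ a → F.sup (fun s => ρ s x) = ⊥) ∧
      (¬ x ≤ a → F.sup (fun s => ρ s x) = b) := by
  classical
  have := Fintype.ofFinite S
  -- Simplicity, applied to the congruence "same annihilator in `S`".
  have hann : ∀ x y : M, (∀ s, ρ s x = ⊥ ↔ ρ s y = ⊥) → x = y := by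
    refine (hsimple (fun x y => ∀ s, ρ s x = ⊥ ↔ ρ s y = ⊥) ⟨fun _ _ => Iff.rfl,
      fun h s => (h s).symm, fun h k s => (h s).trans (k s)⟩ ?_ ?_).resolve_right ?_
    · intro x y z h s
      rw [hsup, hsup, sup_eq_bot_iff, sup_eq_bot_iff, h s]
    · intro t x y h s
      simpa [hmul] using h (t * s)
    · intro hfull
      obtain ⟨s, m, hm⟩ := hnz
      exact hm ((hfull ⊥ m s).1 (hbot s))
  -- Every nonzero element generates `M` through joins of its images alone.
  have hgen : ∀ x : M, x ≠ ⊥ → ∀ y : M, ∃ F : Finset S, F.sup (fun s => ρ s x) = y := by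
    intro x hx
    refine hmin {y | ∃ F : Finset S, F.sup (fun s => ρ s x) = y} ⟨∅, rfl⟩ ?_ ?_ ?_
    · rintro _ ⟨F, rfl⟩ _ ⟨G, rfl⟩
      exact ⟨F ∪ G, Finset.sup_union⟩
    · rintro _ ⟨F, rfl⟩ t
      refine ⟨F.image (· * t), ?_⟩
      rw [map_finset_sup_of_action ρ hsup hbot, Finset.sup_image]
      refine Finset.sup_congr rfl fun s _ => ?_
      simp [hmul]
    · by_contra hcon
      push Not at hcon
      refine hx (hann x ⊥ fun s => ?_)
      simp only [hbot, iff_true]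
      exact hcon _ ⟨{s}, by simp⟩
  have hle : ∀ x : M, x ≠ ⊥ → ∀ y : M, y ≤ Finset.univ.sup (fun s => ρ s x) := by
    intro x hx y
    obtain ⟨F, rfl⟩ := hgen x hx y
    exact Finset.sup_mono (Finset.subset_univ F)
  have hvanish : ∀ a x : M,
      (Finset.univ.filter (fun s => ρ s a = ⊥)).sup (fun s => ρ s x) = ⊥ ↔ x ≤ a := by
    intro a x
    simp only [Finset.sup_eq_bot_iff, Finset.mem_filter, Finset.mem_univ, true_and]
    constructor
    · intro h
      refine sup_eq_right.1 (hann (x ⊔ a) a fun s => ?_)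
      rw [hsup, sup_eq_bot_iff]
      exact ⟨fun k => k.2, fun k => ⟨h s k, k⟩⟩
    · intro h s hs
      have := hsup s x a
      rw [sup_eq_right.2 h, hs] at this
      exact (sup_eq_bot_iff.1 this.symm).1
  intro a b
  obtain ⟨s₀, m, hm⟩ := hnz
  -- `T` is the top element of `M`.
  obtain ⟨T, hT⟩ : ∃ T : M, T = Finset.univ.sup (fun s => ρ s m) := ⟨_, rfl⟩
  have hm0 : m ≠ ⊥ := fun h => hm (h ▸ hbot s₀)
  have htop : ∀ y, y ≤ T := hT ▸ hle m hm0
  have hT0 : T ≠ ⊥ := fun h => hm0 (le_bot_iff.1 (h ▸ htop m))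
  obtain ⟨H, hH⟩ := hgen T hT0 b
  obtain ⟨K, hK⟩ := exists_sup_comp ρ hsup hbot hmul
    (Finset.univ.filter (fun s => ρ s a = ⊥)) Finset.univ
  obtain ⟨L, hL⟩ := exists_sup_comp ρ hsup hbot hmul K H
  refine ⟨L, fun x => ⟨fun hx => ?_, fun hx => ?_⟩⟩
  · rw [hL, hK, (hvanish a x).2 hx]
    simp [hbot]
  · rw [hL, hK, le_antisymm (htop _) (hle _ (fun h => hx ((hvanish a x).1 h)) T), hH]
end
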